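/- arXiv:1012.4257 — 2 statements merged into one kernel-verified Lean document; each statement's English description precedes it below -/
import Mathlib

section
/- Let n ≥ 2. Let R := ℤ[x₁,x₂,q]/(h_{2n}(x₁,x₂), h_n(x₁²,x₂²) + q), and let σ be the ring involution of R induced by the automorphism of ℤ[x₁,x₂,q] swapping x₁ and x₂ and fixing q. Then the ring ℤ[a₁,a₂,q]/(δ_{2n}, δ'_{2n+1} + q) is isomorphic to the subring R^σ of σ-invariant elements of R, via the ring homomorphism induced by a₁ ↦ x₁ + x₂, a₂ ↦ x₁x₂, q ↦ q. -/
/-- The sequence `a₀ = 1, a₁, a₂` (and `0` otherwise) of coefficients in `ℤ[a₁,a₂]`. -/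
noncomputable def aseq2 (k : ℤ) : MvPolynomial (Fin 2) ℤ :=
  if k = 0 then 1
  else if k = 1 then MvPolynomial.X 0
  else if k = 2 then MvPolynomial.X 1
  else 0

/-- `δ_r := det((a_{1+j−i})_{1≤i,j≤r})`, with `δ₀ = 1`. -/
noncomputable def delta (r : ℕ) : MvPolynomial (Fin 2) ℤ :=
  Matrix.det (Matrix.of fun i j : Fin r => aseq2 (1 + ((j : ℕ) : ℤ) - ((i : ℕ) : ℤ)))

/-- The complete homogeneous symmetric function `h_r(y₁,y₂) = ∑_{i=0}^r y₁^i y₂^{r−i}`. -/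
def hc {R : Type*} [CommRing R] (r : ℕ) (y₁ y₂ : R) : R :=
  ∑ i ∈ Finset.range (r + 1), y₁ ^ i * y₂ ^ (r - i)

open MvPolynomial in
theorem delta_rec (r : ℕ) : delta (r + 2) = X 0 * delta (r + 1) - X 1 * delta r := by
  have e1 : ∀ k : ℕ, ∀ i j : Fin k, aseq2 (1 + ((j.succ : ℕ) : ℤ) - ((i.succ : ℕ) : ℤ))
      = aseq2 (1 + ((j : ℕ) : ℤ) - ((i : ℕ) : ℤ)) := by
    intro k i j
    congr 1
    push_cast [Fin.val_succ]
    ring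
  unfold delta
  rw [Matrix.det_succ_column_zero, Fin.sum_univ_succ, Fin.sum_univ_succ]
  rw [Finset.sum_eq_zero (s := Finset.univ)]
  · have hA : (Matrix.of fun i j : Fin (r+2) => aseq2 (1 + ((j : ℕ) : ℤ) - ((i : ℕ) : ℤ))).submatrix
        ((0 : Fin (r+2)).succAbove) Fin.succ
        = Matrix.of fun i j : Fin (r+1) => aseq2 (1 + ((j : ℕ) : ℤ) - ((i : ℕ) : ℤ)) := by
      ext1 i j
      simp only [Matrix.submatrix_apply, Matrix.of_apply, Fin.zero_succAbove]
      exact e1 _ i j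
    rw [hA]
    have hB : ((Matrix.of fun i j : Fin (r+2) => aseq2 (1 + ((j : ℕ) : ℤ) - ((i : ℕ) : ℤ))).submatrix
        ((Fin.succ (0 : Fin (r+1))).succAbove) Fin.succ).det = X 1 *
        (Matrix.of fun i j : Fin r => aseq2 (1 + ((j : ℕ) : ℤ) - ((i : ℕ) : ℤ))).det := by
      rw [Matrix.det_succ_row_zero, Fin.sum_univ_succ, Finset.sum_eq_zero (s := Finset.univ)]
      · have hC : (((Matrix.of fun i j : Fin (r+2) => aseq2 (1 + ((j : ℕ) : ℤ) - ((i : ℕ) : ℤ))).submatrix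
          ((Fin.succ (0 : Fin (r+1))).succAbove) Fin.succ).submatrix Fin.succ
            ((0 : Fin (r+1)).succAbove))
            = Matrix.of fun i j : Fin r => aseq2 (1 + ((j : ℕ) : ℤ) - ((i : ℕ) : ℤ)) := by
          ext1 i j
          simp only [Matrix.submatrix_apply, Matrix.of_apply, Fin.zero_succAbove,
            Fin.succ_succAbove_succ]
          rw [e1, e1]
        rw [hC]
        simp [aseq2]
      · intro j _
        simp only [Matrix.submatrix_apply, Matrix.of_apply, Fin.succ_succAbove_zero]
        have : aseq2 (1 + (((j.succ.succ : Fin (r+2)) : ℕ) : ℤ) - (((0 : Fin (r+2)) : ℕ) : ℤ)) = 0 := by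
          unfold aseq2
          simp only [Fin.val_succ, Fin.val_zero]
          push_cast
          rw [if_neg (by omega), if_neg (by omega), if_neg (by omega)]
        rw [this]; ring
    rw [hB]
    simp [aseq2]
    ring
  · intro j _
    have : aseq2 (1 + (((0 : Fin (r+2)) : ℕ) : ℤ) - (((j.succ.succ : Fin (r+2)) : ℕ) : ℤ)) = 0 := by
      unfold aseq2
      simp only [Fin.val_succ, Fin.val_zero]
      push_cast
      rw [if_neg (by omega), if_neg (by omega), if_neg (by omega)]
    simp only [Matrix.of_apply]
    rw [this]; ring

theorem delta_zero : delta 0 = 1 := by simp [delta]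

theorem delta_one : delta 1 = MvPolynomial.X 0 := by simp [delta, aseq2]

theorem hc_mul {R : Type*} [CommRing R] (r : ℕ) (x y : R) :
    hc r x y * (x - y) = x ^ (r + 1) - y ^ (r + 1) := by
  unfold hc
  have := (Commute.all x y).geom_sum₂_mul (r + 1)
  simpa using this

theorem delta_hc {R : Type*} [CommRing R] [IsDomain R] (f : MvPolynomial (Fin 2) ℤ →+* R)
    (x y : R) (hxy : x - y ≠ 0) (h0 : f (MvPolynomial.X 0) = x + y)
    (h1 : f (MvPolynomial.X 1) = x * y) (r : ℕ) : f (delta r) = hc r x y := by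
  apply mul_right_cancel₀ hxy
  rw [hc_mul]
  induction r using Nat.twoStepInduction with
  | zero => simp [delta_zero]
  | one => rw [delta_one, h0]; ring
  | more r ih1 ih2 =>
    rw [delta_rec, map_sub, map_mul, map_mul, h0, h1, sub_mul, mul_assoc, mul_assoc, ih1, ih2]
    ring

theorem delta_not_two (r : ℕ) : ¬ (MvPolynomial.C 2 ∣ delta r) := by
  intro h
  have h2 : ∀ r, MvPolynomial.aeval ![(1 : ℤ), 0] (delta r) = 1 := by
    intro r
    induction r using Nat.twoStepInduction with
    | zero => simp [delta_zero]
    | one => simp [delta_one]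
    | more r ih1 ih2 => rw [delta_rec, map_sub, map_mul, map_mul, ih1, ih2]; simp
  have h3 := map_dvd (MvPolynomial.aeval ![(1 : ℤ), 0]) h
  rw [h2] at h3
  rw [MvPolynomial.aeval_C] at h3
  norm_num at h3

open MvPolynomial in
/-- two-torsion-freeness -/
theorem tors (d δ' : MvPolynomial (Fin 2) ℤ) (hd : ¬ (C 2 ∣ d)) (t : MvPolynomial (Fin 3) ℤ)
    (ht : 2 * t ∈ Ideal.span {rename (Fin.castSucc : Fin 2 → Fin 3) d,
      rename (Fin.castSucc : Fin 2 → Fin 3) δ' + X 2}) :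
    t ∈ Ideal.span {rename (Fin.castSucc : Fin 2 → Fin 3) d,
      rename (Fin.castSucc : Fin 2 → Fin 3) δ' + X 2} := by
  set I := Ideal.span {rename (Fin.castSucc : Fin 2 → Fin 3) d,
      rename (Fin.castSucc : Fin 2 → Fin 3) δ' + X 2} with hI
  let χ : MvPolynomial (Fin 3) ℤ →ₐ[ℤ] MvPolynomial (Fin 2) ℤ := aeval ![X 0, X 1, -δ']
  have hχ : ∀ p, χ (rename (Fin.castSucc : Fin 2 → Fin 3) p) = p := by
    intro p
    have : χ.comp (rename (Fin.castSucc : Fin 2 → Fin 3)) = AlgHom.id ℤ _ := by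
      ext1 i
      fin_cases i <;> simp [χ]
    exact DFunLike.congr_fun this p
  have hmk : ∀ p, Ideal.Quotient.mk I (rename (Fin.castSucc : Fin 2 → Fin 3) (χ p))
      = Ideal.Quotient.mk I p := by
    intro p
    have : ((Ideal.Quotient.mkₐ ℤ I).comp (rename (Fin.castSucc : Fin 2 → Fin 3))).comp χ
        = Ideal.Quotient.mkₐ ℤ I := by
      ext1 i
      fin_cases i
      · simp [χ]
      · simp [χ]
      · simp only [χ, AlgHom.comp_apply, Ideal.Quotient.mkₐ_eq_mk, aeval_X]
        apply Ideal.Quotient.eq.2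
        have h : rename (Fin.castSucc : Fin 2 → Fin 3) δ' + X 2 ∈ I :=
          Ideal.subset_span (by simp)
        have := I.neg_mem h
        simp only [Fin.reduceFinMk, Matrix.cons_val, map_neg]
        convert this using 1
        ring
    exact DFunLike.congr_fun this p
  obtain ⟨a, b, hab⟩ := Ideal.mem_span_pair.1 ht
  have h1 := congrArg χ hab
  have hX2 : χ (X 2) = -δ' := by simp [χ]
  rw [map_add, map_mul, map_mul, map_add, hχ, hχ, hX2, map_mul, map_ofNat] at h1
  have hC : (C 2 : MvPolynomial (Fin 2) ℤ) = 2 := by simp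
  have hp : Prime (C 2 : MvPolynomial (Fin 2) ℤ) := prime_C_iff _ |>.2 Int.prime_two
  have h2 : χ a * d = C 2 * χ t := by rw [hC, ← h1]; ring
  obtain ⟨c, hc⟩ := (hp.dvd_or_dvd (Dvd.intro _ h2.symm)).resolve_right hd
  have h3 : χ t = c * d := by
    apply mul_left_cancel₀ hp.ne_zero
    rw [← h2, hc]; ring
  rw [← Ideal.Quotient.eq_zero_iff_mem, ← hmk, h3, map_mul, map_mul]
  rw [Ideal.Quotient.eq_zero_iff_mem.2 (show rename (Fin.castSucc : Fin 2 → Fin 3) d ∈ I from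
    Ideal.subset_span (by simp)), mul_zero]

open MvPolynomial in
/-- symmetric substitution -/
noncomputable def phi : MvPolynomial (Fin 3) ℤ →ₐ[ℤ] MvPolynomial (Fin 3) ℤ :=
  aeval ![X 0 + X 1, X 0 * X 1, X 2]

open MvPolynomial in
/-- quadratic extension -/
abbrev QA := QuadraticAlgebra (MvPolynomial (Fin 3) ℤ) (-X 1) (X 0)

open MvPolynomial in
/-- coordinates -/
noncomputable def psi : MvPolynomial (Fin 3) ℤ →ₐ[ℤ] QA :=
  aeval ![(⟨0, 1⟩ : QA), ⟨X 0, -1⟩, ⟨X 2, 0⟩]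

open MvPolynomial in
theorem psi_phi (p : MvPolynomial (Fin 3) ℤ) : psi (phi p) = ⟨p, 0⟩ := by
  have : psi.comp phi = (IsScalarTower.toAlgHom ℤ (MvPolynomial (Fin 3) ℤ) QA) := by
    ext1 i
    fin_cases i <;> simp [psi, phi] <;> ext <;> simp
  exact (DFunLike.congr_fun this p)

open MvPolynomial in
theorem phi_psi (p : MvPolynomial (Fin 3) ℤ) :
    phi (psi p).re + phi (psi p).im * X 0 = p := by
  have p0 : phi (X 0) = X 0 + X 1 := by simp [phi]
  have p1 : phi (X 1) = X 0 * X 1 := by simp [phi]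
  have p2 : phi (X 2) = X 2 := by simp [phi]
  induction p using MvPolynomial.induction_on with
  | C a => simp [psi, phi]
  | add p q hp hq =>
    simp only [map_add, QuadraticAlgebra.re_add, QuadraticAlgebra.im_add]
    linear_combination hp + hq
  | mul_X p i hp =>
    have : phi (psi (X i)).re + phi (psi (X i)).im * X 0 = X i := by
      fin_cases i <;> simp [psi, p0, p2]
    simp only [map_mul, QuadraticAlgebra.re_mul, QuadraticAlgebra.im_mul, map_add, map_neg, p0, p1]
    linear_combination hp * X i + (phi (psi p).re + phi (psi p).im * X 0) * this

/-- Let `n ≥ 2`, `R := ℤ[x₁,x₂,q]/(h_{2n}(x₁,x₂), h_n(x₁²,x₂²) + q)` and let `σ` be the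
ring involution of `R` induced by swapping `x₁` and `x₂` and fixing `q`. Then
`ℤ[a₁,a₂,q]/(δ_{2n}, δ'_{2n+1} + q)` (where `δ'_{2n+1} = δ_{2n+1}/a₁`) is isomorphic to the
subring of `σ`-invariants of `R`, via the ring homomorphism induced by `a₁ ↦ x₁ + x₂`,
`a₂ ↦ x₁x₂`, `q ↦ q`. -/
theorem stmt_10 (n : ℕ) (hn : 2 ≤ n)
    (δ' : MvPolynomial (Fin 2) ℤ) (hδ' : MvPolynomial.X 0 * δ' = delta (2 * n + 1))
    (IR : Ideal (MvPolynomial (Fin 3) ℤ))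
    (hIR : IR = Ideal.span
      {hc (2 * n) (MvPolynomial.X 0 : MvPolynomial (Fin 3) ℤ) (MvPolynomial.X 1),
        hc n ((MvPolynomial.X 0 : MvPolynomial (Fin 3) ℤ) ^ 2) (MvPolynomial.X 1 ^ 2)
          + MvPolynomial.X 2})
    (IS : Ideal (MvPolynomial (Fin 3) ℤ))
    (hIS : IS = Ideal.span
      {MvPolynomial.rename (Fin.castSucc : Fin 2 → Fin 3) (delta (2 * n)),
        MvPolynomial.rename (Fin.castSucc : Fin 2 → Fin 3) δ' + MvPolynomial.X 2})
    (σ : (MvPolynomial (Fin 3) ℤ ⧸ IR) →+* (MvPolynomial (Fin 3) ℤ ⧸ IR))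
    (hσ : ∀ p : MvPolynomial (Fin 3) ℤ,
      σ (Ideal.Quotient.mk IR p)
        = Ideal.Quotient.mk IR (MvPolynomial.rename (⇑(Equiv.swap (0 : Fin 3) 1)) p)) :
    ∃ e : (MvPolynomial (Fin 3) ℤ ⧸ IS) ≃+*
        (RingHom.eqLocus σ (RingHom.id (MvPolynomial (Fin 3) ℤ ⧸ IR))),
      ∀ p : MvPolynomial (Fin 3) ℤ,
        (↑(e (Ideal.Quotient.mk IS p)) : MvPolynomial (Fin 3) ℤ ⧸ IR)
          = Ideal.Quotient.mk IR
              (MvPolynomial.aeval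
                ![MvPolynomial.X 0 + MvPolynomial.X 1,
                  MvPolynomial.X 0 * MvPolynomial.X 1, MvPolynomial.X 2] p) := by
  have hphi : (MvPolynomial.aeval
                ![MvPolynomial.X 0 + MvPolynomial.X 1,
                  MvPolynomial.X 0 * MvPolynomial.X 1, MvPolynomial.X 2] :
      MvPolynomial (Fin 3) ℤ →ₐ[ℤ] MvPolynomial (Fin 3) ℤ) = phi := rfl
  simp only [hphi]
  let x : MvPolynomial (Fin 3) ℤ := MvPolynomial.X 0
  let y : MvPolynomial (Fin 3) ℤ := MvPolynomial.X 1
  have hxy : x - y ≠ 0 := by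
    intro h
    have := congrArg (MvPolynomial.aeval ![(1 : ℤ), 0, 0]) h
    simp [x, y] at this
  have hxy' : x + y ≠ 0 := by
    intro h
    have := congrArg (MvPolynomial.aeval ![(1 : ℤ), 0, 0]) h
    simp [x, y] at this
  let f : MvPolynomial (Fin 2) ℤ →+* MvPolynomial (Fin 3) ℤ :=
    (phi.comp (MvPolynomial.rename (Fin.castSucc : Fin 2 → Fin 3))).toRingHom
  have f0 : f (MvPolynomial.X 0) = x + y := by simp [f, phi, x, y]
  have f1 : f (MvPolynomial.X 1) = x * y := by simp [f, phi, x, y]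
  have hd : ∀ r, f (delta r) = hc r x y := delta_hc f x y hxy f0 f1
  have hd' : f δ' = hc n (x ^ 2) (y ^ 2) := by
    apply mul_left_cancel₀ hxy'
    apply mul_right_cancel₀ hxy
    rw [← f0, ← map_mul, hδ', hd, hc_mul, f0]
    have := hc_mul n (x ^ 2) (y ^ 2)
    linear_combination -this
  set g1 := MvPolynomial.rename (Fin.castSucc : Fin 2 → Fin 3) (delta (2 * n)) with hg1
  set g2 := MvPolynomial.rename (Fin.castSucc : Fin 2 → Fin 3) δ' + MvPolynomial.X 2 with hg2
  have hG1 : phi g1 = hc (2 * n) x y := hd (2 * n)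
  have hG2 : phi g2 = hc n (x ^ 2) (y ^ 2) + MvPolynomial.X 2 := by
    rw [← hd', hg2, map_add]
    congr 1
    simp [phi]
  have hIR' : IR = Ideal.span {phi g1, phi g2} := by rw [hG1, hG2, hIR]
  have key : ∀ p ∈ IR, (psi p).re ∈ IS ∧ (psi p).im ∈ IS := by
    intro p hp
    rw [hIR'] at hp
    obtain ⟨a, b, rfl⟩ := Ideal.mem_span_pair.1 hp
    rw [hIS]
    simp only [map_add, map_mul, psi_phi]
    constructor
    · exact Ideal.mem_span_pair.2 ⟨(psi a).re, (psi b).re, by simp⟩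
    · exact Ideal.mem_span_pair.2 ⟨(psi a).im, (psi b).im, by simp⟩
  have hle : ∀ p ∈ IS, phi p ∈ IR := by
    intro p hp
    rw [hIS] at hp
    obtain ⟨a, b, rfl⟩ := Ideal.mem_span_pair.1 hp
    rw [hIR']
    exact Ideal.mem_span_pair.2 ⟨phi a, phi b, by simp⟩
  have hsw : ∀ p, MvPolynomial.rename (⇑(Equiv.swap (0 : Fin 3) 1)) (phi p) = phi p := by
    intro p
    have : (MvPolynomial.rename (⇑(Equiv.swap (0 : Fin 3) 1))).comp phi = phi := by
      ext1 i
      fin_cases i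
      · simp [phi, add_comm]
      · simp [phi, mul_comm]
      · have : (Equiv.swap (0 : Fin 3) 1) 2 = 2 := by decide
        simp [phi, this]
    exact DFunLike.congr_fun this p
  let F : (MvPolynomial (Fin 3) ℤ ⧸ IS) →+* (MvPolynomial (Fin 3) ℤ ⧸ IR) :=
    Ideal.Quotient.lift IS ((Ideal.Quotient.mk IR).comp phi.toRingHom)
      (fun p hp => Ideal.Quotient.eq_zero_iff_mem.2 (hle p hp))
  have hF : ∀ p, F (Ideal.Quotient.mk IS p) = Ideal.Quotient.mk IR (phi p) := fun p => rfl
  have hFm : ∀ z, F z ∈ RingHom.eqLocus σ (RingHom.id (MvPolynomial (Fin 3) ℤ ⧸ IR)) := by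
    intro z
    obtain ⟨p, rfl⟩ := Ideal.Quotient.mk_surjective z
    change σ (F (Ideal.Quotient.mk IS p)) = F (Ideal.Quotient.mk IS p)
    rw [hF, hσ, hsw]
  let G := F.codRestrict (RingHom.eqLocus σ (RingHom.id (MvPolynomial (Fin 3) ℤ ⧸ IR))) hFm
  have hGb : Function.Bijective G := by
    constructor
    · rw [injective_iff_map_eq_zero]
      intro z hz
      obtain ⟨p, rfl⟩ := Ideal.Quotient.mk_surjective z
      have h1 : F (Ideal.Quotient.mk IS p) = 0 := congrArg Subtype.val hz
      rw [hF, Ideal.Quotient.eq_zero_iff_mem] at h1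
      have h2 := (key _ h1).1
      rw [psi_phi] at h2
      exact Ideal.Quotient.eq_zero_iff_mem.2 h2
    · rintro ⟨z, hz⟩
      obtain ⟨p, rfl⟩ := Ideal.Quotient.mk_surjective z
      have h1 : σ (Ideal.Quotient.mk IR p) = Ideal.Quotient.mk IR p := hz
      rw [hσ, Ideal.Quotient.eq] at h1
      obtain ⟨s, hs⟩ : ∃ s, s = (psi p).re := ⟨_, rfl⟩
      obtain ⟨t, ht⟩ : ∃ t, t = (psi p).im := ⟨_, rfl⟩
      have hp := phi_psi p
      rw [← hs, ← ht] at hp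
      have h2 : MvPolynomial.rename (⇑(Equiv.swap (0 : Fin 3) 1)) p - p = phi t * (y - x) := by
        rw [← hp, map_add, map_mul, hsw, hsw]
        simp [x, y]
        ring
      rw [h2] at h1
      have h3 := (key _ h1).2
      have h4 : (psi (phi t * (y - x))).im = -(2 * t) := by
        rw [map_mul, psi_phi]
        simp [psi, x, y]
        ring
      rw [h4, Ideal.neg_mem_iff, hIS] at h3
      have h5 := tors _ _ (delta_not_two _) t h3
      rw [← hg1, ← hg2, ← hIS] at h5
      refine ⟨Ideal.Quotient.mk IS s, Subtype.ext ?_⟩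
      change F _ = Ideal.Quotient.mk IR p
      rw [hF, ← hp, map_add, map_mul, Ideal.Quotient.eq_zero_iff_mem.2 (hle _ h5), zero_mul,
        add_zero]
  exact ⟨RingEquiv.ofBijective G hGb, fun p => rfl⟩
end

section
/- Let n ≥ 2. The quotient of the polynomial ring ℤ[a₁,…,a_{2n−1}] by the ideal generated by the determinants d_r for 3 ≤ r ≤ 2n together with the element b_n is a free ℤ-module of rank 2n². -/
/-- The sequence `a₀ = 1, a₁, …, a_d` (and `0` otherwise) in `ℤ[a₁,…,a_d]`. -/
noncomputable def aseq (d : ℕ) (k : ℤ) : MvPolynomial (Fin d) ℤ :=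
  if h : 1 ≤ k ∧ k ≤ d then MvPolynomial.X ⟨(k - 1).toNat, by omega⟩
  else if k = 0 then 1 else 0

/-- `d_r := det((a_{1+j−i})_{1≤i,j≤r})` in `ℤ[a₁,…,a_d]`, with `d₀ = 1`. -/
noncomputable def dr (d r : ℕ) : MvPolynomial (Fin d) ℤ :=
  Matrix.det (Matrix.of fun i j : Fin r => aseq d (1 + ((j : ℕ) : ℤ) - ((i : ℕ) : ℤ)))

/-- `b_r := a_r² + 2∑_{i≥1} (−1)^i a_{r+i} a_{r−i}` in `ℤ[a₁,…,a_d]` (the sum is finite: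
all terms with `i > 2d` vanish). -/
noncomputable def bpoly (d r : ℕ) : MvPolynomial (Fin d) ℤ :=
  aseq d r ^ 2 +
    2 * ∑ i ∈ Finset.Icc 1 (2 * d),
      (-1 : MvPolynomial (Fin d) ℤ) ^ i * (aseq d ((r : ℤ) + i) * aseq d ((r : ℤ) - i))


/-! recurrences -/

noncomputable def hs {S : Type*} [CommRing S] (x y : S) : ℕ → S
  | 0 => 1
  | 1 => x
  | (k+2) => x * hs x y (k+1) - y * hs x y k

noncomputable def cs {S : Type*} [CommRing S] (x y : S) : ℕ → S
  | 0 => 1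
  | 1 => x^2 - 2*y
  | (k+2) => (x^2-2*y) * cs x y (k+1) - y^2 * cs x y k

theorem map_hs {S T : Type*} [CommRing S] [CommRing T] (f : S →+* T) (x y : S) (k : ℕ) :
    f (hs x y k) = hs (f x) (f y) k := by
  induction k using Nat.strong_induction_on with
  | _ k ih =>
    match k with
    | 0 => simp [hs]
    | 1 => simp [hs]
    | k+2 => simp [hs, ih k (by omega), ih (k+1) (by omega)]

theorem map_cs {S T : Type*} [CommRing S] [CommRing T] (f : S →+* T) (x y : S) (k : ℕ) :
    f (cs x y k) = cs (f x) (f y) k := by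
  induction k using Nat.strong_induction_on with
  | _ k ih =>
    match k with
    | 0 => simp [cs]
    | 1 => simp [cs, map_ofNat f 2]
    | k+2 => simp [cs, map_ofNat f 2, ih k (by omega), ih (k+1) (by omega)]

theorem hs_cs {S : Type*} [CommRing S] (x y : S) (k : ℕ) :
    hs x y (2*k+2) = cs x y (k+1) + y * cs x y k ∧ hs x y (2*k+3) = x * cs x y (k+1) := by
  induction k with
  | zero => constructor <;> simp only [hs, cs, Nat.mul_zero, Nat.zero_add] <;> ring
  | succ k ih =>
    obtain ⟨h1, h2⟩ := ih
    have e1 : hs x y (2*(k+1)+2) = x * hs x y (2*k+3) - y * hs x y (2*k+2) := rfl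
    have e2 : hs x y (2*(k+1)+3) = x * hs x y (2*(k+1)+2) - y * hs x y (2*k+3) := rfl
    have e3 : cs x y (k+1+1) = (x^2-2*y) * cs x y (k+1) - y^2 * cs x y k := rfl
    constructor
    · rw [e1, e3, h1, h2]; ring
    · rw [e2, e1, e3, h1, h2]; ring

open PowerSeries in
theorem conv_hs {S : Type*} [CommRing S] (x y : S) (k : ℕ) :
    ∑ j ∈ Finset.range (2*k+1), (-1)^j * (hs x y j * hs x y (2*k-j)) = cs x y k := by
  have key1 : (PowerSeries.mk (hs x y)) * (1 - C x * X + C y * X^2) = 1 := by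
    ext m
    match m with
    | 0 => simp [mul_add, mul_sub, hs]
    | 1 => 
      simp [mul_add, mul_sub, ← mul_assoc, coeff_one, coeff_succ_mul_X, coeff_mul_X_pow', hs]
    | m+2 => 
      simp [mul_add, mul_sub, ← mul_assoc, coeff_one, coeff_succ_mul_X, coeff_mul_X_pow', hs]
      ring
  have key2 : (PowerSeries.mk (fun j => (-1)^j * hs x y j)) * (1 + C x * X + C y * X^2) = 1 := by
    ext m
    match m with
    | 0 => simp [mul_add, mul_sub, hs]
    | 1 => 
      simp [mul_add, mul_sub, ← mul_assoc, coeff_one, coeff_succ_mul_X, coeff_mul_X_pow', hs]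
    | m+2 => 
      simp [mul_add, mul_sub, ← mul_assoc, coeff_one, coeff_succ_mul_X, coeff_mul_X_pow', hs]
      ring
  set P : PowerSeries S := PowerSeries.mk (fun j => (-1)^j * hs x y j) * PowerSeries.mk (hs x y)
    with hP
  have key3 : P * (1 - C (x^2 - 2*y) * X^2 + C (y^2) * X^4) = 1 := by
    have : (1 - C (x^2 - 2*y) * X^2 + C (y^2) * X^4 : PowerSeries S)
      = (1 - C x * X + C y * X^2) * (1 + C x * X + C y * X^2) := by
      simp only [map_sub, map_pow, map_mul, map_ofNat]; ring
    rw [this, hP]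
    calc _ = (PowerSeries.mk (fun j => (-1)^j * hs x y j) * (1 + C x * X + C y * X^2)) *
        (PowerSeries.mk (hs x y) * (1 - C x * X + C y * X^2)) := by ring
      _ = 1 := by rw [key1, key2, one_mul]
  have hc : ∀ k, coeff (2*k) P = cs x y k := by
    intro k
    induction k using Nat.strong_induction_on with
    | _ k ih =>
      have h := congrArg (coeff (2*k)) key3
      match k with
      | 0 => 
        simpa [mul_add, mul_sub, ← mul_assoc, coeff_one, coeff_mul_X_pow', cs] using h
      | 1 => 
        have := ih 0 (by omega)
        simp only [mul_add, mul_sub, ← mul_assoc, coeff_one, coeff_mul_X_pow', map_add, map_sub,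
          coeff_mul_C, mul_one] at h
        simp [cs] at h this ⊢
        rw [this] at h
        linear_combination h
      | k+2 => 
        have h1 := ih k (by omega)
        have h2 := ih (k+1) (by omega)
        rw [mul_add P, mul_sub P, ← mul_assoc P, ← mul_assoc P, mul_one, map_add, map_sub,
          coeff_mul_X_pow', coeff_mul_X_pow', if_pos (by omega), if_pos (by omega),
          coeff_mul_C, coeff_mul_C, coeff_one, if_neg (by omega),
          show 2*(k+2)-2 = 2*(k+1) by omega, show 2*(k+2)-4 = 2*k by omega, h1, h2] at h
        simp only [cs]
        linear_combination h
  rw [← hc, hP, coeff_mul, Finset.Nat.sum_antidiagonal_eq_sum_range_succ_mk]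
  apply Finset.sum_congr rfl
  intros; simp [mul_assoc]

theorem sum_symm {S : Type*} [CommRing S] (n : ℕ) (f : ℕ → S)
    (hf : ∀ i ≤ n, f (n - i) = f (n + i)) :
    ∑ j ∈ Finset.range (2*n+1), f j = f n + 2 * ∑ i ∈ Finset.Icc 1 n, f (n+i) := by
  have h1 : ∑ i ∈ Finset.Icc 1 n, f (n+i) = ∑ i ∈ Finset.range n, f (n+1+i) := by
    rw [Finset.range_eq_Ico]
    have := Finset.sum_Ico_add' (fun i => f (n+i)) 0 n 1
    rw [show Finset.Icc 1 n = Finset.Ico (0+1) (n+1) by ext i; simp only [Finset.mem_Icc, Finset.mem_Ico]; omega, ← this]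
    apply Finset.sum_congr rfl; intro i _; rw [show n + 1 + i = n + (i+1) by omega]
  rw [show 2*n+1 = (n+1)+n by omega, Finset.sum_range_add, Finset.sum_range_succ, h1]
  have h2 : ∑ i ∈ Finset.range n, f i = ∑ i ∈ Finset.range n, f (n+1+i) := by
    rw [← Finset.sum_range_reflect]
    apply Finset.sum_congr rfl
    intro i hi
    rw [Finset.mem_range] at hi
    rw [show n - 1 - i = n - (i+1) by omega, hf _ (by omega)]
    congr 1; omega
  rw [h2]; ring

/-! determinants -/

noncomputable def Er (d r : ℕ) (m : ℤ) : MvPolynomial (Fin d) ℤ :=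
  Matrix.det (Matrix.of fun i j : Fin r =>
    if (i : ℕ) = 0 then aseq d (m + (j:ℕ)) else aseq d (1 + ((j : ℕ) : ℤ) - ((i : ℕ) : ℤ)))

theorem aseq_neg (d : ℕ) (k : ℤ) (hk : k < 0) : aseq d k = 0 := by
  unfold aseq; rw [dif_neg (by omega), if_neg (by omega)]
theorem aseq_big (d : ℕ) (k : ℤ) (hk : (d:ℤ) < k) : aseq d k = 0 := by
  unfold aseq; rw [dif_neg (by omega), if_neg (by omega)]
theorem aseq_zero (d : ℕ) : aseq d 0 = 1 := by
  unfold aseq; rw [dif_neg (by omega), if_pos rfl]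

theorem Er_one (d : ℕ) (m : ℤ) : Er d 1 m = aseq d m := by simp [Er]

theorem Er_eq_dr (d r : ℕ) : Er d r 1 = dr d r := by
  unfold Er dr
  congr 1
  apply Matrix.ext
  intro i j
  simp only [Matrix.of_apply]
  split_ifs with h <;> simp [h]

theorem Er_succ (d r : ℕ) (m : ℤ) :
    Er d (r+2) m = aseq d m * dr d (r+1) - Er d (r+1) (m+1) := by
  unfold Er dr
  rw [Matrix.det_succ_column_zero, Fin.sum_univ_succ, Fin.sum_univ_succ, Finset.sum_eq_zero]
  · simp only [Matrix.of_apply, Fin.val_zero, Fin.val_succ, Fin.succAbove_zero, Fin.val_one]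
    have e1 : (Matrix.of fun i j : Fin (r+2) =>
      if (i : ℕ) = 0 then aseq d (m + (j:ℕ)) else aseq d (1 + ((j : ℕ) : ℤ) - ((i : ℕ) : ℤ))).submatrix
        Fin.succ Fin.succ = Matrix.of fun i j : Fin (r+1) =>
          aseq d (1 + ((j : ℕ) : ℤ) - ((i : ℕ) : ℤ)) := by
      apply Matrix.ext
      intro i j
      simp only [Matrix.submatrix_apply, Matrix.of_apply]
      rw [if_neg (by simp)]
      simp only [Fin.val_succ]
      congr 1; push_cast; ring
    have e2 : (Matrix.of fun i j : Fin (r+2) =>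
      if (i : ℕ) = 0 then aseq d (m + (j:ℕ)) else aseq d (1 + ((j : ℕ) : ℤ) - ((i : ℕ) : ℤ))).submatrix
        (Fin.succAbove (Fin.succ 0)) Fin.succ = Matrix.of fun i j : Fin (r+1) =>
          if (i : ℕ) = 0 then aseq d (m + 1 + (j:ℕ)) else aseq d (1 + ((j : ℕ) : ℤ) - ((i : ℕ) : ℤ)) := by
      apply Matrix.ext
      intro i j
      simp only [Matrix.submatrix_apply, Matrix.of_apply]
      refine Fin.cases ?_ (fun i => ?_) i
      · simp only [Fin.succ_succAbove_zero, Fin.val_zero, if_true, Fin.val_succ]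
        congr 1; push_cast; ring
      · rw [Fin.succ_succAbove_succ, Fin.succAbove_zero]
        rw [if_neg (by simp), if_neg (by simp)]
        simp only [Fin.val_succ]
        congr 1; push_cast; ring
    rw [e1, e2]
    simp [aseq_zero]
    ring
  · intro i _
    simp only [Matrix.of_apply, Fin.val_zero, Fin.val_succ]
    rw [if_neg (by omega), aseq_neg _ _ (by push_cast; omega)]
    ring

theorem Er_three (d : ℕ) (m : ℤ) :
    Er d 3 m = aseq d (m+2) - aseq d 1 * aseq d (m+1) + (aseq d 1^2 - aseq d 2) * aseq d m := by
  rw [Er_succ, Er_succ, Er_one, ← Er_eq_dr, ← Er_eq_dr, Er_succ, Er_one, ← Er_eq_dr, Er_one,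
    show m+1+1 = m+2 by ring]
  norm_num
  ring

theorem Er_three_zero (d : ℕ) : Er d 3 0 = 0 := by
  rw [Er_three]; norm_num [aseq_zero]; ring

/-- if the `d_r` vanish for `3 ≤ r < m+3` then `E(3,m+1) = ± d_{m+3}` -/
theorem Er_shift {T : Type*} [CommRing T] (d : ℕ) (f : MvPolynomial (Fin d) ℤ →+* T) (m : ℕ)
    (hd : ∀ r, 3 ≤ r → r < m + 3 → f (dr d r) = 0) :
    f (dr d (m+3)) = (-1)^m * f (Er d 3 (m+1)) := by
  have : ∀ j ≤ m, f (dr d (m+3)) = (-1)^j * f (Er d (m - j + 3) (j+1)) := by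
    intro j hj
    induction j with
    | zero => simp [Er_eq_dr]
    | succ j ih =>
      rw [ih (by omega), show m - j + 3 = (m - (j+1) + 2) + 2 by omega, Er_succ, map_sub, map_mul,
        hd _ (by omega) (by omega)]
      push_cast; ring
  simpa using this m le_rfl

theorem dr_iff {T : Type*} [CommRing T] (d : ℕ) (f : MvPolynomial (Fin d) ℤ →+* T) (N : ℕ) :
    (∀ r, 3 ≤ r → r < N + 3 → f (dr d r) = 0) ↔ (∀ m < N, f (Er d 3 (m+1)) = 0) := by
  induction N with
  | zero => constructor <;> intros <;> omega
  | succ N ih =>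
    constructor
    · intro h m hm
      rcases Nat.lt_succ_iff_lt_or_eq.1 hm with h1 | rfl
      · exact ih.1 (fun r h2 h3 => h r h2 (by omega)) m h1
      · have := Er_shift d f m (fun r h2 h3 => h r h2 (by omega))
        rw [h _ (by omega) (by omega)] at this
        have h4 := congrArg (fun z => (-1)^m * z) this
        simp only [mul_zero, ← mul_assoc, ← mul_pow] at h4
        simpa using h4.symm
    · intro h r hr hr'
      have h0 := ih.2 (fun m hm => h m (by omega))
      rcases Nat.lt_or_ge r (N+3) with h1 | h1
      · exact h0 r hr h1
      · obtain rfl : r = N + 3 := by omega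
        rw [Er_shift d f N h0, h N (by omega), mul_zero]

/-- if the `E` vanish, `a_k` are `hs` -/
theorem a_eq_hs {T : Type*} [CommRing T] (d : ℕ) (f : MvPolynomial (Fin d) ℤ →+* T) (N : ℕ)
    (h : ∀ m < N, f (Er d 3 (m+1)) = 0) (k : ℕ) (hk : k < N + 3) :
    f (aseq d k) = hs (f (aseq d 1)) (f (aseq d 1)^2 - f (aseq d 2)) k := by
  induction k using Nat.strong_induction_on with
  | _ k ih =>
    match k with
    | 0 => simp [hs, aseq_zero]
    | 1 => simp [hs]
    | k+2 =>
      have h1 := ih k (by omega) (by omega)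
      have h2 := ih (k+1) (by omega) (by omega)
      have h3 : f (Er d 3 k) = 0 := by
        cases k with
        | zero => simp [Er_three_zero]
        | succ k => exact_mod_cast h k (by omega)
      rw [Er_three] at h3
      simp only [map_sub, map_add, map_mul, map_pow] at h3
      simp only [hs]
      rw [← h1, ← h2]
      push_cast
      linear_combination h3

theorem map_bpoly {T : Type*} [CommRing T] (d n : ℕ) (hdn : d < 2 * n) (hd : n ≤ d)
    (f : MvPolynomial (Fin d) ℤ →+* T) (x y : T)
    (h : ∀ k ≤ 2 * n, f (aseq d k) = hs x y k) :
    f (bpoly d n) = (-1)^n * cs x y n := by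
  rw [← conv_hs, sum_symm]
  · unfold bpoly
    have : ∑ i ∈ Finset.Icc 1 (2 * d),
      (-1 : MvPolynomial (Fin d) ℤ) ^ i * (aseq d ((n : ℤ) + i) * aseq d ((n : ℤ) - i)) =
      ∑ i ∈ Finset.Icc 1 n,
      (-1 : MvPolynomial (Fin d) ℤ) ^ i * (aseq d ((n : ℤ) + i) * aseq d ((n : ℤ) - i)) := by
      symm
      apply Finset.sum_subset
      · intro i; simp; omega
      · intro i hi hi'
        simp at hi hi'
        rw [aseq_neg d (n - i) (by omega)]; ring
    rw [this]
    simp only [map_add, map_mul, map_pow, map_sum, map_neg, map_one, map_ofNat]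
    rw [mul_add, h n (by omega), show 2 * n - n = n by omega, ← mul_assoc, ← mul_pow,
      mul_left_comm ((-1)^n) 2, Finset.mul_sum ((Finset.Icc 1 n)) _ ((-1)^n)]
    congr 1
    · simp; ring
    · congr 1
      apply Finset.sum_congr rfl
      intro i hi
      simp at hi
      have e1 : f (aseq d (n + i)) = hs x y (n+i) := by exact_mod_cast h (n+i) (by omega)
      have e2 : f (aseq d (n - i)) = hs x y (n-i) := by
        have := h (n-i) (by omega)
        rwa [Nat.cast_sub hi.2] at this
      rw [e1, e2, show 2*n-(n+i) = n - i by omega, pow_add, ← mul_assoc, ← mul_assoc, ← mul_assoc,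
        ← mul_assoc, ← mul_pow]
      simp
  · intro i hi
    rw [show 2*n-(n-i) = n+i by omega, show 2*n-(n+i) = n-i by omega]
    have : (-1:T)^(n+i) = (-1)^(n-i) := by
      rw [show n + i = n - i + 2 * i by omega, pow_add, pow_mul]; simp
    rw [this]; ring

/-! module part -/

theorem free_ext {A B C : Type*} [AddCommGroup A] [AddCommGroup B] [AddCommGroup C]
    (f : A →ₗ[ℤ] B) (g : B →ₗ[ℤ] C) (hf : Function.Injective f) (hg : Function.Surjective g)
    (hfg : Function.Exact f g) (a c : ℕ)
    (hA : Module.Free ℤ A ∧ Module.Finite ℤ A ∧ Module.finrank ℤ A = a)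
    (hC : Module.Free ℤ C ∧ Module.Finite ℤ C ∧ Module.finrank ℤ C = c) :
    Module.Free ℤ B ∧ Module.Finite ℤ B ∧ Module.finrank ℤ B = a + c := by
  obtain ⟨_, _, ha⟩ := hA
  obtain ⟨_, _, hc⟩ := hC
  obtain ⟨l, hl⟩ := Module.projective_lifting_property g LinearMap.id hg
  obtain ⟨e, -⟩ := hfg.splitSurjectiveEquiv hf ⟨l, hl⟩
  refine ⟨Module.Free.of_equiv e.symm, Module.Finite.equiv e.symm, ?_⟩
  rw [e.finrank_eq, Module.finrank_prod, ha, hc]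

open Polynomial

/-- `ℤ[x][y]` -/
abbrev Rxy := Polynomial (Polynomial ℤ)

noncomputable def xx : Rxy := C X
noncomputable def yy : Rxy := X

noncomputable def Jid (k j : ℕ) : Ideal Rxy :=
  Ideal.span {cs xx yy (k+1), yy^j * cs xx yy k}

theorem cs_y_zero {S : Type*} [CommRing S] (x : S) (k : ℕ) : cs x 0 k = x^(2*k) := by
  induction k using Nat.strong_induction_on with
  | _ k ih =>
    match k with
    | 0 => simp [cs]
    | 1 => simp [cs]
    | k+2 => simp [cs, ih (k+1) (by omega)]; ring

noncomputable def ev0 (k : ℕ) : Rxy →+* AdjoinRoot (X^(2*k) : ℤ[X]) :=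
  (AdjoinRoot.mk _).comp (evalRingHom 0)

theorem ev0_surj (k : ℕ) : Function.Surjective (ev0 k) := by
  intro z
  obtain ⟨p, rfl⟩ := AdjoinRoot.mk_surjective z
  exact ⟨C p, by simp [ev0]⟩

theorem eval_cs (k : ℕ) : eval 0 (cs xx yy k) = X^(2*k) := by
  have := map_cs (evalRingHom (0 : ℤ[X])) xx yy k
  simpa [xx, yy, cs_y_zero] using this

theorem ev0_ker (k : ℕ) (p : Rxy) (hp : ev0 k p = 0) :
    ∃ u v, p = u * cs xx yy k + v * yy := by
  simp only [ev0, RingHom.comp_apply, AdjoinRoot.mk_eq_zero, coe_evalRingHom] at hp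
  obtain ⟨u, hu⟩ := hp
  have : X ∣ p - C u * cs xx yy k := by
    rw [X_dvd_iff, coeff_zero_eq_eval_zero, eval_sub, eval_mul, eval_cs, hu, eval_C]; ring
  obtain ⟨v, hv⟩ := this
  exact ⟨C u, v, by change p = _ + v * X; linear_combination hv⟩

theorem y_regular (k : ℕ) (p a : Rxy) (h : yy * p = a * cs xx yy k) :
    ∃ b, p = b * cs xx yy k := by
  have h0 : X ∣ a := by
    rw [X_dvd_iff, coeff_zero_eq_eval_zero]
    have := congrArg (eval 0) h
    rw [eval_mul, eval_mul, eval_cs, yy, eval_X, zero_mul] at this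
    rcases mul_eq_zero.1 this.symm with h | h
    · exact h
    · exact absurd h (pow_ne_zero _ X_ne_zero)
  obtain ⟨b, rfl⟩ := h0
  refine ⟨b, ?_⟩
  have : (X : Rxy) ≠ 0 := X_ne_zero
  apply mul_left_cancel₀ this
  rw [← mul_assoc]; exact h

theorem Jid_succ (k : ℕ) : Jid (k+1) 0 = Jid k 2 := by
  have e : cs xx yy (k+1+1) = (xx^2-2*yy) * cs xx yy (k+1) - yy^2 * cs xx yy k := rfl
  unfold Jid
  apply le_antisymm
  · rw [Ideal.span_le]
    rintro z (rfl | rfl)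
    · exact Ideal.mem_span_pair.2 ⟨xx^2-2*yy, -1, by rw [e]; ring⟩
    · exact Ideal.mem_span_pair.2 ⟨1, 0, by ring⟩
  · rw [Ideal.span_le]
    rintro z (rfl | rfl)
    · exact Ideal.mem_span_pair.2 ⟨0, 1, by ring⟩
    · exact Ideal.mem_span_pair.2 ⟨-1, xx^2-2*yy, by rw [e]; ring⟩

theorem quot_free_step (k j a : ℕ)
    (h : Module.Free ℤ (Rxy ⧸ Jid k j) ∧ Module.Finite ℤ (Rxy ⧸ Jid k j) ∧
      Module.finrank ℤ (Rxy ⧸ Jid k j) = a) :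
    Module.Free ℤ (Rxy ⧸ Jid k (j+1)) ∧ Module.Finite ℤ (Rxy ⧸ Jid k (j+1)) ∧
      Module.finrank ℤ (Rxy ⧸ Jid k (j+1)) = a + 2*(k+1) := by
  have hle : Jid k j ≤ Submodule.comap (LinearMap.mulLeft Rxy yy) (Jid k (j+1)) := by
    intro p hp
    obtain ⟨u, v, rfl⟩ := Ideal.mem_span_pair.1 hp
    exact Ideal.mem_span_pair.2 ⟨yy * u, v, by rw [LinearMap.mulLeft_apply]; ring⟩
  have hker : ∀ p ∈ Jid k (j+1), ev0 (k+1) p = 0 := by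
    intro p hp
    obtain ⟨u, v, rfl⟩ := Ideal.mem_span_pair.1 hp
    have : eval 0 yy = 0 := eval_X
    simp [ev0, eval_cs, this]
  let f : (Rxy ⧸ Jid k j) →ₗ[Rxy] (Rxy ⧸ Jid k (j+1)) := Submodule.mapQ _ _ _ hle
  let g : (Rxy ⧸ Jid k (j+1)) →+* AdjoinRoot (X^(2*(k+1)) : ℤ[X]) := Ideal.Quotient.lift _ _ hker
  have hmon : (X^(2*(k+1)) : ℤ[X]).Monic := monic_X_pow _
  refine free_ext f.toAddMonoidHom.toIntLinearMap g.toAddMonoidHom.toIntLinearMap ?_ ?_ ?_ a _ h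
    ⟨hmon.free_adjoinRoot, hmon.finite_adjoinRoot, ?_⟩
  · change Function.Injective f
    rw [injective_iff_map_eq_zero]
    intro z hz
    obtain ⟨p, rfl⟩ := Ideal.Quotient.mk_surjective z
    have hz' : yy * p ∈ Jid k (j+1) := Ideal.Quotient.eq_zero_iff_mem.1 hz
    obtain ⟨u, v, huv⟩ := Ideal.mem_span_pair.1 hz'
    obtain ⟨b, hb⟩ := y_regular (k+1) (p - v * yy^j * cs xx yy k) u (by linear_combination -huv)
    exact Ideal.Quotient.eq_zero_iff_mem.2 (Ideal.mem_span_pair.2 ⟨b, v, by linear_combination -hb⟩)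
  · exact Ideal.Quotient.lift_surjective_of_surjective _ hker (ev0_surj _)
  · intro z
    change g z = 0 ↔ ∃ w, f w = z
    obtain ⟨p, rfl⟩ := Ideal.Quotient.mk_surjective z
    constructor
    · intro hp
      obtain ⟨u, v, rfl⟩ := ev0_ker (k+1) p hp
      refine ⟨Ideal.Quotient.mk _ v, ?_⟩
      change Ideal.Quotient.mk _ (yy * v) = _
      rw [Ideal.Quotient.eq]
      exact Ideal.mem_span_pair.2 ⟨-u, 0, by ring⟩
    · rintro ⟨w, hw⟩
      obtain ⟨q, rfl⟩ := Ideal.Quotient.mk_surjective w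
      rw [← hw]
      change ev0 (k+1) (yy * q) = 0
      simp [ev0, yy]
  · have := (AdjoinRoot.powerBasis' hmon).finrank
    rw [this]; simp

theorem quot_free (k j : ℕ) :
    Module.Free ℤ (Rxy ⧸ Jid k j) ∧ Module.Finite ℤ (Rxy ⧸ Jid k j) ∧
      Module.finrank ℤ (Rxy ⧸ Jid k j) = 2*k*(k+1) + 2*j*(k+1) := by
  have main : ∀ k, (Module.Free ℤ (Rxy ⧸ Jid k 0) ∧ Module.Finite ℤ (Rxy ⧸ Jid k 0) ∧
      Module.finrank ℤ (Rxy ⧸ Jid k 0) = 2*k*(k+1)) → ∀ j,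
      Module.Free ℤ (Rxy ⧸ Jid k j) ∧ Module.Finite ℤ (Rxy ⧸ Jid k j) ∧
      Module.finrank ℤ (Rxy ⧸ Jid k j) = 2*k*(k+1) + 2*j*(k+1) := by
    intro k h j
    induction j with
    | zero => simpa using h
    | succ j ih =>
      have := quot_free_step k j _ ih
      rwa [show 2*k*(k+1) + 2*j*(k+1) + 2*(k+1) = 2*k*(k+1) + 2*(j+1)*(k+1) by ring] at this
  apply main
  clear j
  induction k with
  | zero =>
    have : Jid 0 0 = ⊤ := by
      rw [Ideal.eq_top_iff_one]
      exact Ideal.mem_span_pair.2 ⟨0, 1, by simp [cs]⟩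
    have hs : Subsingleton (Rxy ⧸ Jid 0 0) := Ideal.Quotient.subsingleton_iff.2 this
    exact ⟨Module.Free.of_subsingleton _ _, inferInstance, by
      simpa using Module.finrank_zero_of_subsingleton⟩
  | succ k ih =>
    have := main k ih 2
    rw [← Jid_succ] at this
    rwa [show 2*k*(k+1) + 2*2*(k+1) = 2*(k+1)*(k+1+1) by ring] at this

/-! the isomorphism -/

theorem aseq_X (d : ℕ) (i : Fin d) : aseq d ((i : ℕ) + 1) = MvPolynomial.X i := by
  unfold aseq
  rw [dif_pos (by omega)]
  congr 1
  ext
  simp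

noncomputable def Iid (n : ℕ) : Ideal (MvPolynomial (Fin (2 * n - 1)) ℤ) :=
  Ideal.span
    (insert (bpoly (2 * n - 1) n) ((fun r => dr (2 * n - 1) r) '' Set.Icc 3 (2 * n)))

noncomputable def Fm (k : ℕ) : MvPolynomial (Fin (2 * (k+2) - 1)) ℤ →+* Rxy ⧸ Jid (k+1) 1 :=
  (Ideal.Quotient.mk _).comp
    (MvPolynomial.aeval (fun i : Fin (2 * (k+2) - 1) => hs xx yy ((i:ℕ)+1))).toRingHom

theorem mk_cs (k : ℕ) : Ideal.Quotient.mk (Jid (k+1) 1) (cs xx yy (k+2)) = 0 :=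
  Ideal.Quotient.eq_zero_iff_mem.2 (Ideal.mem_span_pair.2 ⟨1, 0, by ring⟩)

theorem mk_hs (k : ℕ) : Ideal.Quotient.mk (Jid (k+1) 1) (hs xx yy (2*(k+2))) = 0 :=
  Ideal.Quotient.eq_zero_iff_mem.2 (Ideal.mem_span_pair.2 ⟨1, 1, by
    rw [show 2*(k+2) = 2*(k+1)+2 by ring, (hs_cs xx yy (k+1)).1]; ring⟩)

theorem Fm_aseq (k m : ℕ) (hm : m ≤ 2*(k+2)) :
    Fm k (aseq _ m) = Ideal.Quotient.mk _ (hs xx yy m) := by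
  rcases Nat.eq_zero_or_pos m with rfl | h0
  · simp [aseq_zero, hs]
  rcases Nat.lt_or_ge m (2*(k+2)) with h1 | h1
  · have := aseq_X (2*(k+2)-1) ⟨m-1, by omega⟩
    have e : (((m-1:ℕ):ℤ) + 1) = m := by omega
    simp only [e] at this
    rw [this]
    simp [Fm, show m - 1 + 1 = m by omega]
  · obtain rfl : m = 2*(k+2) := by omega
    rw [aseq_big _ _ (by push_cast; omega), mk_hs, map_zero]

theorem Fm_ker (k : ℕ) (p) (hp : p ∈ Iid (k+2)) : Fm k p = 0 := by
  have h0 : ∀ m ≤ 2*(k+2), Fm k (aseq _ m)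
      = hs (Ideal.Quotient.mk (Jid (k+1) 1) xx) (Ideal.Quotient.mk (Jid (k+1) 1) yy) m := by
    intro m hm
    exact (Fm_aseq _ _ hm).trans
      (map_hs (S := Rxy) (T := Rxy ⧸ Jid (k+1) 1) (Ideal.Quotient.mk _) _ _ _)
  have hE : ∀ m < 2*k+2, Fm k (Er _ 3 (m+1)) = 0 := by
    intro m hm
    have h1 := h0 1 (by omega)
    have h2 := h0 2 (by omega)
    have h3 := h0 (m+1) (by omega)
    have h4 := h0 (m+2) (by omega)
    have h5 := h0 (m+3) (by omega)
    push_cast at h1 h2 h3 h4 h5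
    rw [Er_three]
    rw [show (m:ℤ)+1+2 = m+3 by ring, show (m:ℤ)+1+1 = m+2 by ring]
    simp only [map_add, map_sub, map_mul, map_pow, h1, h2, h3, h4, h5]
    simp only [hs]
    ring
  suffices Iid (k+2) ≤ RingHom.ker (Fm k) from this hp
  unfold Iid
  rw [Ideal.span_le]
  rintro z (rfl | ⟨r, hr, rfl⟩)
  · change Fm k _ = 0
    have e := map_cs (S := Rxy) (T := Rxy ⧸ Jid (k+1) 1) (Ideal.Quotient.mk (Jid (k+1) 1)) xx yy (k+2)
    rw [mk_cs] at e
    refine (map_bpoly (T := Rxy ⧸ Jid (k+1) 1) (2*(k+2)-1) (k+2) (by omega) (by omega) (Fm k) _ _ h0).trans ?_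
    rw [← e]
    exact mul_zero (M₀ := Rxy ⧸ Jid (k+1) 1) _
  · exact (dr_iff (T := Rxy ⧸ Jid (k+1) 1) (2*(k+2)-1) (Fm k) (2*k+2)).2 hE r hr.1 (by have := hr.2; omega)

noncomputable def Gx (k : ℕ) : MvPolynomial (Fin (2 * (k+2) - 1)) ℤ ⧸ Iid (k+2) :=
  Ideal.Quotient.mk _ (aseq _ 1)
noncomputable def Gy (k : ℕ) : MvPolynomial (Fin (2 * (k+2) - 1)) ℤ ⧸ Iid (k+2) :=
  (Ideal.Quotient.mk _ (aseq _ 1))^2 - Ideal.Quotient.mk _ (aseq _ 2)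

noncomputable def Gm (k : ℕ) : Rxy →+* MvPolynomial (Fin (2 * (k+2) - 1)) ℤ ⧸ Iid (k+2) :=
  eval₂RingHom (eval₂RingHom (Int.castRingHom _) (Gx k)) (Gy k)

theorem Gm_x (k : ℕ) : Gm k xx = Gx k := by simp [Gm, xx]
theorem Gm_y (k : ℕ) : Gm k yy = Gy k := by simp [Gm, yy]

theorem mk_aseq (k m : ℕ) (hm : m ≤ 2*(k+2)) :
    Ideal.Quotient.mk (Iid (k+2)) (aseq _ m) = hs (Gx k) (Gy k) m := by
  refine a_eq_hs _ (Ideal.Quotient.mk (Iid (k+2))) (2*k+2) ?_ m (by omega)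
  rw [← dr_iff]
  intro r h1 h2
  exact Ideal.Quotient.eq_zero_iff_mem.2 (Ideal.subset_span (Or.inr ⟨r, ⟨h1, by omega⟩, rfl⟩))

theorem neg_one_pow_mul_zero {S : Type*} [CommRing S] (m : ℕ) (z : S) (h : (-1)^m * z = 0) :
    z = 0 := by
  have h4 := congrArg (fun z => (-1)^m * z) h
  simp only [mul_zero, ← mul_assoc, ← mul_pow] at h4
  simpa using h4

theorem Gm_ker (k : ℕ) (p) (hp : p ∈ Jid (k+1) 1) : Gm k p = 0 := by
  have hb : Ideal.Quotient.mk (Iid (k+2)) (bpoly _ (k+2)) = 0 :=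
    Ideal.Quotient.eq_zero_iff_mem.2 (Ideal.subset_span (Or.inl rfl))
  rw [map_bpoly _ _ (by omega) (by omega) _ _ _ (mk_aseq k)] at hb
  have hc : cs (Gx k) (Gy k) (k+2) = 0 := by
    exact neg_one_pow_mul_zero _ _ hb
  have hh : hs (Gx k) (Gy k) (2*(k+1)+2) = 0 := by
    have := mk_aseq k (2*(k+2)) le_rfl
    rw [aseq_big _ _ (by push_cast; omega), map_zero] at this
    exact this.symm
  have hy : Gy k * cs (Gx k) (Gy k) (k+1) = 0 := by
    have e := (hs_cs (Gx k) (Gy k) (k+1)).1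
    rw [hh] at e
    have e' : (0 : MvPolynomial (Fin (2 * (k+2) - 1)) ℤ ⧸ Iid (k+2))
      = cs (Gx k) (Gy k) (k+2) + Gy k * cs (Gx k) (Gy k) (k+1) := e
    rw [hc, zero_add] at e'
    exact e'.symm
  obtain ⟨u, v, rfl⟩ := Ideal.mem_span_pair.1 hp
  have e1 : Gm k (cs xx yy (k+1+1)) = 0 := by
    refine (map_cs (Gm k) _ _ _).trans ?_
    rw [Gm_x, Gm_y]; exact hc
  have e2 : Gm k (cs xx yy (k+1)) = cs (Gx k) (Gy k) (k+1) := by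
    refine (map_cs (Gm k) _ _ _).trans ?_
    rw [Gm_x, Gm_y]
  rw [map_add, map_mul, map_mul, map_mul, map_pow, e1, e2, Gm_y, pow_one, hy]
  simp

noncomputable def theEquiv (k : ℕ) :
    (MvPolynomial (Fin (2 * (k+2) - 1)) ℤ ⧸ Iid (k+2)) ≃+* (Rxy ⧸ Jid (k+1) 1) :=
  RingEquiv.ofRingHom (Ideal.Quotient.lift _ (Fm k) (Fm_ker k))
    (Ideal.Quotient.lift _ (Gm k) (Gm_ker k))
    (by
      have h1 := Fm_aseq k 1 (by omega)
      have h2 := Fm_aseq k 2 (by omega)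
      apply Ideal.Quotient.ringHom_ext
      apply Polynomial.ringHom_ext'
      · apply Polynomial.ringHom_ext'
        · exact RingHom.ext_int _ _
        · change Ideal.Quotient.lift _ (Fm k) (Fm_ker k) (Gm k xx) = Ideal.Quotient.mk _ xx
          rw [Gm_x, Gx, Ideal.Quotient.lift_mk]
          simpa [hs] using h1
      · change Ideal.Quotient.lift _ (Fm k) (Fm_ker k) (Gm k yy) = Ideal.Quotient.mk _ yy
        rw [Gm_y, Gy, map_sub, map_pow, Ideal.Quotient.lift_mk, Ideal.Quotient.lift_mk]
        push_cast at h1 h2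
        rw [h1, h2]
        simp only [hs, map_sub, map_mul]
        simp; ring)
    (by
      apply Ideal.Quotient.ringHom_ext
      apply MvPolynomial.ringHom_ext'
      · exact RingHom.ext_int _ _
      · intro i
        change Ideal.Quotient.lift _ (Gm k) (Gm_ker k) (Fm k (MvPolynomial.X i))
          = Ideal.Quotient.mk _ (MvPolynomial.X i)
        have h1 := Fm_aseq k (i+1) (by omega)
        have h2 := mk_aseq k (i+1) (by omega)
        push_cast at h1 h2
        rw [← aseq_X, h1, h2, Ideal.Quotient.lift_mk]
        refine (map_hs (Gm k) _ _ _).trans ?_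
        rw [Gm_x, Gm_y])

/-- For `n ≥ 2`, the quotient of `ℤ[a₁,…,a_{2n−1}]` by the ideal generated by the `d_r`
for `3 ≤ r ≤ 2n` together with `b_n` is a free `ℤ`-module of rank `2n²`. -/
theorem stmt_16 (n : ℕ) (hn : 2 ≤ n) :
    Module.Free ℤ
      (MvPolynomial (Fin (2 * n - 1)) ℤ ⧸
        Ideal.span
          (insert (bpoly (2 * n - 1) n) ((fun r => dr (2 * n - 1) r) '' Set.Icc 3 (2 * n)))) ∧
    Module.finrank ℤ
      (MvPolynomial (Fin (2 * n - 1)) ℤ ⧸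
        Ideal.span
          (insert (bpoly (2 * n - 1) n) ((fun r => dr (2 * n - 1) r) '' Set.Icc 3 (2 * n))))
      = 2 * n ^ 2 := by
  obtain ⟨k, rfl⟩ : ∃ k, n = k + 2 := ⟨n - 2, by omega⟩
  obtain ⟨h1, h2, h3⟩ := quot_free (k+1) 1
  have e : (MvPolynomial (Fin (2 * (k+2) - 1)) ℤ ⧸ Iid (k+2)) ≃ₗ[ℤ] (Rxy ⧸ Jid (k+1) 1) :=
    (theEquiv k).toAddEquiv.toIntLinearEquiv
  refine ⟨Module.Free.of_equiv e.symm, ?_⟩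
  refine e.finrank_eq.trans ?_
  rw [h3]; ring
end
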